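/- Suppose that, for n prisoners, r rooms and q states, the prisoners have a symmetric leader-election strategy, i.e. a symmetric strategy (in which, instead of declaring, a prisoner may designate themselves leader) such that for every schedule exactly one prisoner at some point designates themselves leader. Then the n prisoners have a symmetric winning strategy for r rooms with q + 4 states. -/

import Mathlib

namespace PrisonersGame

/-- A deterministic strategy for a prisoner: given the list of states observed
on previous visits and the state observed on the current visit, return the
state to leave the room in and whether to declare. -/
def Strategy : Type := List ℕ → ℕ → ℕ × Bool

/-- A strategy is valid for `q` states if, whenever all states observed so far
are among `0, …, q-1`, the state it leaves the room in is among `0, …, q-1`. -/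
def Strategy.ValidFor (q : ℕ) (σ : Strategy) : Prop :=
  ∀ (h : List ℕ) (s : ℕ), (∀ x ∈ h, x < q) → s < q → (σ h s).1 < q

/-- A schedule: at each time step, one prisoner is led into one room. -/
def Schedule (n r : ℕ) : Type := ℕ → Fin n × Fin r

/-- A schedule is fair if every prisoner is led into every room infinitely often. -/
def Schedule.Fair {n r : ℕ} (sched : Schedule n r) : Prop :=
  ∀ (p : Fin n) (room : Fin r), {t : ℕ | sched t = (p, room)}.Infinite

/-- The state of play just before step `t`: the current states of the rooms, and
the list of states observed so far by each prisoner. All rooms start in state `0`. -/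
def run {n r : ℕ} (strat : Fin n → Strategy) (sched : Schedule n r) :
    ℕ → (Fin r → ℕ) × (Fin n → List ℕ)
  | 0 => (fun _ => 0, fun _ => [])
  | t + 1 =>
      let prev := run strat sched t
      let p := (sched t).1
      let room := (sched t).2
      let obs := prev.1 room
      (Function.update prev.1 room (strat p (prev.2 p) obs).1,
        Function.update prev.2 p (prev.2 p ++ [obs]))

/-- The prisoner visiting at step `t` declares during that visit. -/
def declaresAt {n r : ℕ} (strat : Fin n → Strategy) (sched : Schedule n r)
    (t : ℕ) : Prop :=
  (strat (sched t).1 ((run strat sched t).2 (sched t).1)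
      ((run strat sched t).1 (sched t).2)).2 = true

/-- Every prisoner has visited every room by step `t` (inclusive). -/
def allVisitedBy {n r : ℕ} (sched : Schedule n r) (t : ℕ) : Prop :=
  ∀ (p : Fin n) (room : Fin r), ∃ s ≤ t, sched s = (p, room)

/-- A strategy profile is winning if, for every fair schedule, some prisoner
eventually declares, and no prisoner ever declares at a time before every
prisoner has visited every room. -/
def Winning {n r : ℕ} (strat : Fin n → Strategy) : Prop :=
  ∀ sched : Schedule n r, sched.Fair →
    (∃ t, declaresAt strat sched t) ∧
    ∀ t, declaresAt strat sched t → allVisitedBy sched t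

/-- `n` prisoners have a winning strategy for `r` rooms with `q` states. -/
def HasWinningStrategy (n r q : ℕ) : Prop :=
  ∃ strat : Fin n → Strategy, (∀ p, (strat p).ValidFor q) ∧ Winning (n := n) (r := r) strat

/-- `n` prisoners have a symmetric winning strategy (all prisoners use the
same strategy) for `r` rooms with `q` states. -/
def HasSymmetricWinningStrategy (n r q : ℕ) : Prop :=
  ∃ σ : Strategy, σ.ValidFor q ∧ Winning (n := n) (r := r) (fun _ => σ)

end PrisonersGame

namespace PrisonersGame

/-- A symmetric leader-election strategy: a single strategy, used by all
prisoners, in which the boolean output is interpreted as designating oneself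
leader (rather than declaring), such that for every fair schedule exactly one
prisoner at some point designates themselves leader. -/
def IsLeaderElection (n r : ℕ) (σ : Strategy) : Prop :=
  ∀ sched : Schedule n r, sched.Fair →
    ∃! p : Fin n, ∃ t : ℕ, (sched t).1 = p ∧
      declaresAt (n := n) (r := r) (fun _ => σ) sched t

end PrisonersGame

/-!
If some `d > 1` divided both `n` and `r`, then a schedule for `n / d` prisoners and `r / d` rooms
could be played by `d` interleaved copies of these prisoners and rooms. All copies of a prisoner
behave alike, so either none or several of them become leader, and the schedule is fair if the
pairing of the copies varies suitably. Hence `n` and `r` are coprime, and there are `quota` and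
`worth > 0` with `n * quota = r * worth + 1`.

Each room starts with a chest of `worth` coins. The prisoners try to hold `quota` coins each, but
there is one coin too few, so in the end exactly one of them is short of a coin; the others pass
their tokens on to that prisoner, who becomes the leader. From then on `worth` coins circulate
beyond the least amount that everybody keeps. Whoever holds this reserve is the only prisoner who
can be putting tokens into rooms, so the tokens found there certify visits of that prisoner. The
others get hold of the reserve by opening chests, and tour all rooms on opening the `(r + 1)`-st.
The leader keeps refilling chests until all others have toured, and then makes the final tour. Every
move decreases a lexicographic potential, so play comes to a standstill, and only the end of the
final tour is one.
-/

namespace PrisonersGame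

theorem run_succ {n r : ℕ} {strat : Fin n → Strategy} {sched : Schedule n r} {t : ℕ} {p : Fin n}
    {x : Fin r} (ht : sched t = (p, x)) :
    run strat sched (t + 1) =
      (Function.update (run strat sched t).1 x
        (strat p ((run strat sched t).2 p) ((run strat sched t).1 x)).1,
      Function.update (run strat sched t).2 p
        ((run strat sched t).2 p ++ [(run strat sched t).1 x])) := by
  simp only [run, ht]

section Lift

variable {a b d : ℕ} [NeZero d]

/-- Each step `(u, v)` of `s` becomes a block of `d` steps in which the `i`-th copy of prisoner `u`
meets the `(i + k)`-th copy of room `v`, for `i : Fin d` in increasing order, where the offset `k`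
depends on the step. -/
def Schedule.lift (s : Schedule a b) (k : ℕ → Fin d) : Schedule (a * d) (b * d) := fun t ↦
  (finProdFinEquiv ((s (t / d)).1, Fin.ofNat d t),
    finProdFinEquiv ((s (t / d)).2, Fin.ofNat d t + k (t / d)))

theorem Schedule.lift_block (s : Schedule a b) (k : ℕ → Fin d) (m : ℕ) (i : Fin d) :
    s.lift k (d * m + i) =
      (finProdFinEquiv ((s m).1, i), finProdFinEquiv ((s m).2, i + k m)) := by
  have hdiv : (d * m + i) / d = m := by
    rw [Nat.mul_add_div i.pos, Nat.div_eq_of_lt i.isLt, add_zero]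
  have hmod : Fin.ofNat d (d * m + i) = i := by
    ext
    simp [Fin.ofNat, Nat.mod_eq_of_lt i.isLt]
  simp only [lift, hdiv, hmod]

theorem run_lift_within_block {σ : Strategy} {s : Schedule a b} {k : ℕ → Fin d} {m : ℕ}
    (hroom : ∀ v j, (run (fun _ ↦ σ) (s.lift k) (d * m)).1 (finProdFinEquiv (v, j)) =
      (run (fun _ ↦ σ) s m).1 v)
    (hhist : ∀ u j, (run (fun _ ↦ σ) (s.lift k) (d * m)).2 (finProdFinEquiv (u, j)) =
      (run (fun _ ↦ σ) s m).2 u) {i : ℕ} (hi : i ≤ d) :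
    (∀ v j, (run (fun _ ↦ σ) (s.lift k) (d * m + i)).1 (finProdFinEquiv (v, j)) =
      (run (fun _ ↦ σ) s (if (j - k m).val < i then m + 1 else m)).1 v) ∧
    (∀ u j, (run (fun _ ↦ σ) (s.lift k) (d * m + i)).2 (finProdFinEquiv (u, j)) =
      (run (fun _ ↦ σ) s (if j.val < i then m + 1 else m)).2 u) := by
  induction i with
  | zero => simpa using ⟨hroom, hhist⟩
  | succ i ih =>
    obtain ⟨ihroom, ihhist⟩ := ih (Nat.le_of_succ_le hi)
    have hlift := s.lift_block k m ⟨i, hi⟩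
    rw [← add_assoc, run_succ hlift]
    simp only [Function.update_apply, EmbeddingLike.apply_eq_iff_eq, Prod.mk.injEq, ihroom, ihhist,
      add_sub_cancel_right, lt_irrefl, if_false]
    constructor
    · intro v j
      have hoffset : j = ⟨i, hi⟩ + k m ↔ (j - k m).val = i := by
        rw [← sub_eq_iff_eq_add, Fin.ext_iff]
      simp only [hoffset]
      rcases lt_trichotomy (j - k m).val i with hji | hji | hji
      · simp [hji, hji.ne, hji.trans (Nat.lt_succ_self i)]
      · simp [hji, run, Function.update_apply]
      · simp [hji.not_gt, hji.ne', Nat.not_lt.mpr hji]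
    · intro u j
      have hcopy : j = ⟨i, hi⟩ ↔ j.val = i := Fin.ext_iff
      simp only [hcopy]
      rcases lt_trichotomy j.val i with hji | hji | hji
      · simp [hji, hji.ne, hji.trans (Nat.lt_succ_self i)]
      · simp [hji, run, Function.update_apply]
      · simp [hji.not_gt, hji.ne', Nat.not_lt.mpr hji]

theorem run_lift (σ : Strategy) (s : Schedule a b) (k : ℕ → Fin d) (m : ℕ) :
    (∀ v j, (run (fun _ ↦ σ) (s.lift k) (d * m)).1 (finProdFinEquiv (v, j)) =
      (run (fun _ ↦ σ) s m).1 v) ∧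
    (∀ u j, (run (fun _ ↦ σ) (s.lift k) (d * m)).2 (finProdFinEquiv (u, j)) =
      (run (fun _ ↦ σ) s m).2 u) := by
  induction m with
  | zero => simp [run]
  | succ m ih =>
    have hend := run_lift_within_block ih.1 ih.2 le_rfl
    simpa only [Fin.is_lt, if_true, ← Nat.mul_succ] using hend

theorem declaresAt_lift (σ : Strategy) (s : Schedule a b) (k : ℕ → Fin d) (m : ℕ) (i : Fin d) :
    declaresAt (fun _ ↦ σ) (s.lift k) (d * m + i) ↔ declaresAt (fun _ ↦ σ) s m := by
  obtain ⟨hroom, hhist⟩ := run_lift σ s k m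
  obtain ⟨hroom, hhist⟩ := run_lift_within_block hroom hhist i.isLt.le
  simp only [declaresAt, s.lift_block, hroom, hhist, add_sub_cancel_right, lt_irrefl, if_false]

theorem Schedule.lift_fair {s : Schedule a b} {k : ℕ → Fin d}
    (h : ∀ u v c, {m | s m = (u, v) ∧ k m = c}.Infinite) : (s.lift k).Fair := by
  intro p x
  obtain ⟨⟨u, i⟩, rfl⟩ := finProdFinEquiv.surjective p
  obtain ⟨⟨v, j⟩, rfl⟩ := finProdFinEquiv.surjective x
  refine ((h u v (j - i)).image (f := fun m ↦ d * m + i) ?_).mono ?_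
  · exact ((add_left_injective _).comp (mul_right_injective₀ (NeZero.ne d))).injOn
  · rintro _ ⟨m, ⟨hs, hk⟩, rfl⟩
    simp [s.lift_block, hs, hk]

end Lift

theorem exists_infinite_fibers (α : Type*) [Nonempty α] [Countable α] :
    ∃ f : ℕ → α, ∀ y, (f ⁻¹' {y}).Infinite := by
  obtain ⟨g, hg⟩ := exists_surjective_nat α
  refine ⟨fun m ↦ g m.unpair.1, fun y ↦ ?_⟩
  obtain ⟨l, rfl⟩ := hg y
  refine (Set.infinite_range_of_injective (f := fun m ↦ Nat.pair l m) ?_).mono ?_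
  · exact fun _ _ h ↦ (Nat.pair_eq_pair.mp h).2
  · rintro _ ⟨m, rfl⟩
    simp

theorem not_isLeaderElection_mul {a b d : ℕ} (ha : 0 < a) (hb : 0 < b) (hd : 1 < d)
    (σ : Strategy) : ¬ IsLeaderElection (a * d) (b * d) σ := by
  intro h
  have : NeZero a := ⟨ha.ne'⟩
  have : NeZero b := ⟨hb.ne'⟩
  have : NeZero d := ⟨by omega⟩
  obtain ⟨e, he⟩ := exists_infinite_fibers ((Fin a × Fin b) × Fin d)
  let s : Schedule a b := fun m ↦ (e m).1
  let k : ℕ → Fin d := fun m ↦ (e m).2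
  have hfair : (s.lift k).Fair :=
    Schedule.lift_fair fun u v c ↦ (he ((u, v), c)).mono fun m (hm : e m = _) ↦ by simp [s, k, hm]
  obtain ⟨p, ⟨t, -, ht⟩, hunique⟩ := h _ hfair
  have hblock : d * (t / d) + Fin.ofNat d t = t := Nat.div_add_mod t d
  rw [← hblock, declaresAt_lift] at ht
  have hleader (i : Fin d) : finProdFinEquiv ((s (t / d)).1, i) = p :=
    hunique _ ⟨d * (t / d) + i, by rw [s.lift_block], (declaresAt_lift ..).mpr ht⟩
  have h01 := (hleader ⟨0, by omega⟩).trans (hleader ⟨1, hd⟩).symm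
  simp at h01

theorem IsLeaderElection.coprime {n r : ℕ} {σ : Strategy} (h : IsLeaderElection n r σ) (hn : 0 < n)
    (hr : 0 < r) : n.Coprime r := by
  by_contra hd
  obtain ⟨a, b, d, hd1, hn', hr'⟩ : ∃ a b d, 1 < d ∧ n = a * d ∧ r = b * d := by
    obtain ⟨d, hd, ⟨a, ha⟩, ⟨b, hb⟩⟩ := Nat.Prime.not_coprime_iff_dvd.mp hd
    exact ⟨a, b, d, hd.one_lt, by lia, by lia⟩
  subst hn' hr'
  exact not_isLeaderElection_mul (Nat.pos_of_mul_pos_right hn) (Nat.pos_of_mul_pos_right hr) hd1 σ h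

theorem exists_mul_eq_mul_add_one {n r : ℕ} (hn : 0 < n) (h : n.Coprime r) :
    ∃ c y : ℤ, 0 < y ∧ n * c = r * y + 1 := by
  have hbezout := Nat.gcd_eq_gcd_ab n r
  rw [h] at hbezout
  set u := n.gcdA r
  set v := n.gcdB r
  refine ⟨u + r * (|v| + 1), n * (|v| + 1) - v, ?_, ?_⟩
  · have := le_abs_self v
    have : (1 : ℤ) ≤ n := by exact_mod_cast hn
    nlinarith [abs_nonneg v]
  · push_cast at hbezout
    linear_combination -hbezout

theorem sum_update_add {ι N A : Type*} [Fintype ι] [DecidableEq ι]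
    [AddCommMonoid A] (f : N → A) (g : ι → N) (i : ι) (y : N) :
    ∑ j, f (Function.update g i y j) + f (g i) = ∑ j, f (g j) + f y := by
  rw [← Finset.sum_erase_add _ _ (Finset.mem_univ i),
    ← Finset.sum_erase_add _ (fun j ↦ f (g j)) (Finset.mem_univ i), Function.update_self,
    Finset.sum_congr rfl fun j hj ↦ by rw [Function.update_of_ne (Finset.ne_of_mem_erase hj)],
    add_right_comm]

theorem add_le_sum_of_nonneg {ι : Type*} [Fintype ι] {f : ι → ℤ}
    (hf : ∀ i, 0 ≤ f i) {i j : ι} (hij : i ≠ j) : f i + f j ≤ ∑ k, f k :=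
  Finset.add_le_sum (fun k _ ↦ hf k) (Finset.mem_univ i) (Finset.mem_univ j) hij

theorem eq_zero_of_sum_le {ι : Type*} [Fintype ι] {f : ι → ℤ}
    (hf : ∀ i, 0 ≤ f i) {i j : ι} (hi : ∑ k, f k ≤ f i) (hij : i ≠ j) : f j = 0 :=
  le_antisymm (by linarith [add_le_sum_of_nonneg hf hij]) (hf j)

/-- A snapshot of the game in which the history of each prisoner is condensed to a memory in `M`. -/
@[ext]
structure Config (M : Type*) (n r : ℕ) where
  mem : Fin n → M
  room : Fin r → ℕ

namespace Config

variable {M : Type*} {n r : ℕ}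

/-- The configuration after prisoner `p` updates the memory to `l` and leaves room `x` in
state `w`. -/
def update (C : Config M n r) (p : Fin n) (x : Fin r) (l : M) (w : ℕ) : Config M n r where
  mem := Function.update C.mem p l
  room := Function.update C.room x w

theorem mem_update (C : Config M n r) (p : Fin n) (x : Fin r) (l : M) (w : ℕ) (q : Fin n) :
    (C.update p x l w).mem q = if q = p then l else C.mem q :=
  Function.update_apply ..

theorem room_update (C : Config M n r) (p : Fin n) (x : Fin r) (l : M) (w : ℕ) (y : Fin r) :
    (C.update p x l w).room y = if y = x then w else C.room y :=
  Function.update_apply ..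

/-- The value of each prisoner and each room, valuing memories by `φ` and room states by `ρ`. -/
def value {A : Type*} (φ : M → A) (ρ : ℕ → A) (C : Config M n r) : Fin n ⊕ Fin r → A :=
  Sum.elim (fun p ↦ φ (C.mem p)) (fun x ↦ ρ (C.room x))

/-- The total value of all prisoners and rooms. -/
def total {A : Type*} [AddCommMonoid A] (φ : M → A) (ρ : ℕ → A) (C : Config M n r) : A :=
  ∑ i, C.value φ ρ i

theorem total_eq {A : Type*} [AddCommMonoid A] (φ : M → A) (ρ : ℕ → A) (C : Config M n r) :
    C.total φ ρ = ∑ p, φ (C.mem p) + ∑ x, ρ (C.room x) :=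
  Fintype.sum_sum_type _

theorem total_update {A : Type*} [AddCommMonoid A] (φ : M → A) (ρ : ℕ → A) (C : Config M n r)
    (p : Fin n) (x : Fin r) (l : M) (w : ℕ) :
    (C.update p x l w).total φ ρ + (φ (C.mem p) + ρ (C.room x)) =
      C.total φ ρ + (φ l + ρ w) := by
  simp only [total_eq, update]
  rw [add_add_add_comm, sum_update_add, sum_update_add, add_add_add_comm]

theorem total_update_eq {A : Type*} [AddCommMonoid A] [IsRightCancelAdd A] {φ : M → A} {ρ : ℕ → A}
    {C : Config M n r} {p : Fin n} {x : Fin r} {l : M} {w : ℕ}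
    (h : φ l + ρ w = φ (C.mem p) + ρ (C.room x)) :
    (C.update p x l w).total φ ρ = C.total φ ρ :=
  add_right_cancel ((total_update φ ρ C p x l w).trans (by rw [h]))

theorem total_update_lt {A : Type*} [AddCommMonoid A] [PartialOrder A] [IsOrderedCancelAddMonoid A]
    {φ : M → A} {ρ : ℕ → A} {C : Config M n r} {p : Fin n} {x : Fin r} {l : M} {w : ℕ}
    (h : φ l + ρ w < φ (C.mem p) + ρ (C.room x)) :
    (C.update p x l w).total φ ρ < C.total φ ρ :=
  lt_of_add_lt_add_right ((total_update φ ρ C p x l w).trans_lt (by gcongr))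

end Config

/-- The prisoner-room pairs scheduled before step `t`. -/
def Schedule.visited {n r : ℕ} (sched : Schedule n r) (t : ℕ) : Set (Fin n × Fin r) :=
  {q | ∃ s < t, sched s = q}

/-- A nondeterministic description of a symmetric strategy: `Step m x l w` allows a prisoner with
memory `m` who finds a room in state `x` to change the memory to `l` and leave state `w`. A visit
that allows no step changes nothing, and a prisoner declares on visits begun with a memory
satisfying `Halted`. -/
structure Protocol (M : Type*) where
  init : M
  Step : M → ℕ → M → ℕ → Prop
  Halted : M → Prop

namespace Protocol

variable {M : Type*} (P : Protocol M) {n r : ℕ}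

open Classical in
/-- The new memory and room state, resolving the nondeterminism of the protocol by choice. -/
noncomputable def move (m : M) (x : ℕ) : M × ℕ :=
  if h : ∃ lw : M × ℕ, P.Step m x lw.1 lw.2 then h.choose else (m, x)

theorem step_move_or_stuck (m : M) (x : ℕ) :
    P.Step m x (P.move m x).1 (P.move m x).2 ∨
      P.move m x = (m, x) ∧ ∀ l w, ¬ P.Step m x l w := by
  by_cases h : ∃ lw : M × ℕ, P.Step m x lw.1 lw.2
  · rw [move, dif_pos h]
    exact .inl h.choose_spec
  · exact .inr ⟨by rw [move, dif_neg h], fun l w hstep ↦ h ⟨(l, w), hstep⟩⟩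

/-- The memory of a prisoner who has observed the given states. -/
noncomputable def memory (history : List ℕ) : M :=
  history.foldl (fun m x ↦ (P.move m x).1) P.init

open Classical in
/-- The strategy of a prisoner following the protocol. -/
noncomputable def strategy : Strategy := fun history x ↦
  ((P.move (P.memory history) x).2, decide (P.Halted (P.memory history)))

theorem strategy_validFor {k : ℕ} (h : ∀ m x l w, P.Step m x l w → x < k → w < k) :
    P.strategy.ValidFor k := by
  intro history x _ hx
  rcases P.step_move_or_stuck (P.memory history) x with hstep | ⟨hstuck, -⟩
  · exact h _ _ _ _ hstep hx
  · simpa only [strategy, hstuck] using hx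

/-- The configuration in which the game starts. -/
def initial : Config M n r := ⟨fun _ ↦ P.init, fun _ ↦ 0⟩

/-- The configuration just before step `t` when all prisoners follow the protocol. -/
noncomputable def config (sched : Schedule n r) (t : ℕ) : Config M n r where
  mem p := P.memory ((run (fun _ ↦ P.strategy) sched t).2 p)
  room := (run (fun _ ↦ P.strategy) sched t).1

theorem config_zero (sched : Schedule n r) : P.config sched 0 = P.initial := rfl

variable {P} {sched : Schedule n r} {t : ℕ} {p : Fin n} {x : Fin r}

theorem declaresAt_strategy (ht : sched t = (p, x)) :
    declaresAt (fun _ ↦ P.strategy) sched t ↔ P.Halted ((P.config sched t).mem p) := by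
  simp [declaresAt, strategy, config, ht]

theorem config_succ (ht : sched t = (p, x)) :
    P.config sched (t + 1) = (P.config sched t).update p x
      (P.move ((P.config sched t).mem p) ((P.config sched t).room x)).1
      (P.move ((P.config sched t).mem p) ((P.config sched t).room x)).2 := by
  ext y
  · by_cases hy : y = p <;>
      simp [config, run_succ ht, Config.update, Function.update_apply, hy, memory]
  · simp [config, run_succ ht, Config.update, strategy]

theorem config_succ_cases (ht : sched t = (p, x)) :
    (∃ l w, P.Step ((P.config sched t).mem p) ((P.config sched t).room x) l w ∧
      P.config sched (t + 1) = (P.config sched t).update p x l w) ∨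
    P.config sched (t + 1) = P.config sched t ∧
      ∀ l w, ¬ P.Step ((P.config sched t).mem p) ((P.config sched t).room x) l w := by
  rw [config_succ ht]
  rcases P.step_move_or_stuck ((P.config sched t).mem p) ((P.config sched t).room x) with
    hstep | ⟨hmove, hstuck⟩
  · exact .inl ⟨_, _, hstep, rfl⟩
  · exact .inr ⟨by simp [hmove, Config.update], hstuck⟩

/-- No prisoner can make a step in any room. -/
def Quiescent (P : Protocol M) (C : Config M n r) : Prop :=
  ∀ p x l w, ¬ P.Step (C.mem p) (C.room x) l w

theorem Quiescent.not_step {C : Config M n r} (h : P.Quiescent C) {s : ℕ} (hx : C.room x = s)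
    {l : M} {w : ℕ} : ¬ P.Step (C.mem p) s l w :=
  hx ▸ h p x l w

theorem exists_quiescent {A : Type*} [AddCommMonoid A] [PartialOrder A] [IsOrderedCancelAddMonoid A]
    [WellFoundedLT A] {φ : M → A} {ρ : ℕ → A}
    (hlt : ∀ m x l w, P.Step m x l w → φ l + ρ w < φ m + ρ x) (hfair : sched.Fair) :
    ∃ T, P.Quiescent (P.config sched T) ∧ ∀ t, T ≤ t → P.config sched t = P.config sched T := by
  have hdrop {t p x l w} (hstep : P.Step ((P.config sched t).mem p) ((P.config sched t).room x) l w)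
      (hsucc : P.config sched (t + 1) = (P.config sched t).update p x l w) :
      (P.config sched (t + 1)).total φ ρ < (P.config sched t).total φ ρ :=
    hsucc ▸ Config.total_update_lt (hlt _ _ _ _ hstep)
  have hanti : Antitone fun t ↦ (P.config sched t).total φ ρ := antitone_nat_of_succ_le fun t ↦ by
    rcases config_succ_cases (P := P) (sched := sched) (t := t) rfl with
      ⟨l, w, hstep, hsucc⟩ | ⟨hsame, -⟩
    · exact (hdrop hstep hsucc).le
    · rw [hsame]
  obtain ⟨T, hT⟩ := WellFoundedLT.antitone_chain_condition hanti
  have hstuck {t p x} (htT : T ≤ t) (ht : sched t = (p, x)) : P.config sched (t + 1) =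
      P.config sched t ∧
        ∀ l w, ¬ P.Step ((P.config sched t).mem p) ((P.config sched t).room x) l w :=
    (config_succ_cases ht).resolve_left fun ⟨l, w, hstep, hsucc⟩ ↦
      (hdrop hstep hsucc).ne ((hT _ (htT.trans t.le_succ)).symm.trans (hT t htT))
  have hconst : ∀ t, T ≤ t → P.config sched t = P.config sched T := fun t ht ↦ by
    induction t, ht using Nat.le_induction with
    | base => rfl
    | succ t htT ih => rw [(hstuck htT rfl).1, ih]
  refine ⟨T, fun p x ↦ ?_, hconst⟩
  obtain ⟨t, ht, hTt⟩ := (hfair p x).exists_gt T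
  simpa only [hconst t hTt.le] using (hstuck hTt.le ht).2

theorem config_invariant {Inv : Config M n r → Set (Fin n × Fin r) → Prop}
    (hinit : Inv P.initial ∅)
    (hmono : ∀ {C V W}, Inv C V → V ⊆ W → Inv C W)
    (hstep : ∀ {C V p x l w}, Inv C V → (p, x) ∈ V → P.Step (C.mem p) (C.room x) l w →
      Inv (C.update p x l w) V) (sched : Schedule n r) (t : ℕ) :
    Inv (P.config sched t) (sched.visited t) := by
  induction t with
  | zero => simpa [config_zero, Schedule.visited] using hinit
  | succ t ih =>
    have hvisit : sched t ∈ sched.visited (t + 1) := ⟨t, t.lt_succ_self, rfl⟩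
    have ih' : Inv (P.config sched t) (sched.visited (t + 1)) :=
      hmono ih fun _ ⟨s, hs, hsq⟩ ↦ ⟨s, hs.trans t.lt_succ_self, hsq⟩
    rcases config_succ_cases (P := P) (sched := sched) (t := t) rfl with
      ⟨l, w, hs, hsucc⟩ | ⟨hsame, -⟩
    · rw [hsucc]
      exact hstep ih' hvisit hs
    · rwa [hsame]

theorem winning_of_invariant {A : Type*} [AddCommMonoid A] [PartialOrder A]
    [IsOrderedCancelAddMonoid A] [WellFoundedLT A] {φ : M → A} {ρ : ℕ → A}
    (hlt : ∀ m x l w, P.Step m x l w → φ l + ρ w < φ m + ρ x)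
    {Inv : Config M n r → Set (Fin n × Fin r) → Prop}
    (hinit : Inv P.initial ∅)
    (hmono : ∀ {C V W}, Inv C V → V ⊆ W → Inv C W)
    (hstep : ∀ {C V p x l w}, Inv C V → (p, x) ∈ V → P.Step (C.mem p) (C.room x) l w →
      Inv (C.update p x l w) V)
    (hhalted : ∀ {C V p}, Inv C V → P.Halted (C.mem p) → ∀ p x, (p, x) ∈ V)
    (hquiescent : ∀ {C V}, Inv C V → P.Quiescent C → ∃ p, P.Halted (C.mem p)) :
    Winning (n := n) (r := r) fun _ ↦ P.strategy := by
  intro sched hfair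
  have hinv := config_invariant hinit hmono hstep sched
  constructor
  · obtain ⟨T, hT, hconst⟩ := exists_quiescent hlt hfair
    obtain ⟨p, hp⟩ := hquiescent (hinv T) hT
    obtain ⟨t, ht, hTt⟩ := (hfair p (sched 0).2).exists_gt T
    exact ⟨t, (declaresAt_strategy ht).mpr (by rwa [hconst t hTt.le])⟩
  · intro t ht p x
    obtain ⟨s, hs, hsx⟩ := hhalted (hinv t) ((declaresAt_strategy rfl).mp ht) p x
    exact ⟨s, hs.le, hsx⟩

end Protocol

/-- The constants of the four-state protocol: every room initially holds a chest of `worth` coins,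
and the prisoners aim at `quota` coins each, one more in total than there are. -/
structure Parameters (n r : ℕ) where
  worth : ℤ
  quota : ℤ
  worth_pos : 0 < worth
  budget : n * quota = r * worth + 1

/-- The stages in the life of a prisoner following the four-state protocol. Only a `marking` or a
`finishing` prisoner puts tokens into rooms that every other prisoner leaves alone. -/
inductive Phase
  | regular
  | marking
  | unmarking
  | leader
  | finishing

/-- What a prisoner remembers: the numbers of coins and tokens held, the number of chests opened
minus the number of chests put back, and the current phase. -/
structure Memory where
  coins : ℤ
  tokens : ℤ
  chests : ℤ
  phase : Phase

namespace Parameters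

variable {n r : ℕ} (π : Parameters n r)

/-- The coins in a room, whose states stand for: `0` a chest, `1` empty, `2` a coin, `3` a token. -/
def roomCoins (s : ℕ) : ℤ := if s = 0 then π.worth else if s = 2 then 1 else 0

/-- The tokens in a room. -/
def roomTokens (s : ℕ) : ℤ := if s = 3 then 1 else 0

/-- The chests in a room. -/
def roomChests (s : ℕ) : ℤ := if s = 0 then 1 else 0

/-- The value of `chests` for the leader once each of the other `n - 1` prisoners has opened `r + 1`
chests: the balances of all prisoners add up to `r` when no room holds a chest. -/
def lastChests (n r : ℕ) : ℤ := r - (n - 1) * (r + 1)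

/-- The moves of the four-state protocol.

Up to `elect` the prisoners balance coins; the one prisoner who is short of a coin in the end
collects all `n` tokens and becomes the leader. A prisoner who opens the `(r + 1)`-st chest makes a
tour, leaving a token in every room (`mark`) and then removing them (`unmark`). The leader puts
chests back (`reset`) until all the others have made their tours, and then makes a final tour. -/
inductive Rule : Memory → ℕ → Memory → ℕ → Prop
  | openChest {m : Memory} : m.phase = .regular → m.chests < r →
      Rule m 0 { m with coins := m.coins + π.worth, chests := m.chests + 1 } 1
  | startTour {m : Memory} : m.phase = .regular → m.chests = r → m.tokens = 0 →
      Rule m 0 { m with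
        coins := m.coins + π.worth, chests := m.chests + 1, phase := .marking } 1
  | dropCoin {m : Memory} : m.phase = .regular → π.quota < m.coins →
      Rule m 1 { m with coins := m.coins - 1 } 2
  | takeCoin {m : Memory} : m.phase = .regular → m.coins < π.quota →
      Rule m 2 { m with coins := m.coins + 1 } 1
  | dropToken {m : Memory} : m.phase = .regular → m.coins = π.quota → 0 < m.tokens →
      Rule m 1 { m with tokens := m.tokens - 1 } 3
  | takeToken {m : Memory} : m.phase = .regular → m.coins < π.quota →
      Rule m 3 { m with tokens := m.tokens + 1 } 1
  | elect {m : Memory} {x : ℕ} : m.phase = .regular → m.coins = π.quota - 1 → m.tokens = n →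
      lastChests n r ≤ m.chests → Rule m x { m with phase := .leader } x
  | mark {m : Memory} : m.phase = .marking → -r < m.tokens →
      Rule m 1 { m with tokens := m.tokens - 1 } 3
  | turn {m : Memory} {x : ℕ} : m.phase = .marking → m.tokens = -r →
      Rule m x { m with phase := .unmarking } x
  | unmark {m : Memory} : m.phase = .unmarking → m.tokens < 0 →
      Rule m 3 { m with tokens := m.tokens + 1 } 1
  | finish {m : Memory} {x : ℕ} : m.phase = .unmarking → m.tokens = 0 →
      Rule m x { m with phase := .regular } x
  | reset {m : Memory} : m.phase = .leader → m.coins = π.quota - 1 → lastChests n r < m.chests →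
      Rule m 1 { m with coins := m.coins - π.worth, chests := m.chests - 1 } 0
  | collect {m : Memory} : m.phase = .leader → m.coins < π.quota - 1 →
      Rule m 2 { m with coins := m.coins + 1 } 1
  | retire {m : Memory} {x : ℕ} : m.phase = .leader → m.coins = π.quota - 1 →
      m.chests = lastChests n r → Rule m x { m with phase := .finishing } x
  | finalMark {m : Memory} : m.phase = .finishing → n - r < m.tokens →
      Rule m 1 { m with tokens := m.tokens - 1 } 3

/-- The four-state protocol. -/
def protocol : Protocol Memory where
  init := ⟨0, 1, 0, .regular⟩
  Step := π.Rule
  Halted m := m.phase = .finishing ∧ m.tokens = n - r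

/-- The weight of a memory in the lexicographic potential. Its components count elections and
retirements, unfinished tours and chests, coins to be moved, and tokens to be moved. -/
def memoryPotential (m : Memory) : ℕ ×ₗ ℕ ×ₗ ℕ ×ₗ ℕ :=
  let imbalance := (m.coins - π.quota).natAbs
  match m.phase with
  | .regular => toLex (2, toLex (0, toLex (imbalance,
      if π.quota ≤ m.coins then 2 * m.tokens.toNat else 0)))
  | .marking => toLex (2, toLex ((2 * r + 2 + m.tokens).toNat, toLex (imbalance, 0)))
  | .unmarking => toLex (2, toLex ((1 - m.tokens).toNat, toLex (imbalance, 0)))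
  | .leader => toLex (1, toLex ((2 * r + 5) * (m.chests - lastChests n r).toNat,
      toLex (imbalance, 0)))
  | .finishing => toLex (0, toLex ((m.tokens - (n - r)).toNat, toLex (imbalance, 0)))

/-- The weight of a room state in the lexicographic potential. -/
def roomPotential (r : ℕ) : ℕ → ℕ ×ₗ ℕ ×ₗ ℕ ×ₗ ℕ
  | 0 => toLex (0, toLex (2 * r + 4, toLex (0, 0)))
  | 3 => toLex (0, toLex (0, toLex (0, 1)))
  | _ => toLex (0, toLex (0, toLex (0, 0)))

namespace Rule

variable {π} {m l : Memory} {x w : ℕ}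

theorem room_lt {k : ℕ} (h : π.Rule m x l w) (hk : 4 ≤ k) (hx : x < k) : w < k := by
  cases h <;> lia

theorem coins_eq (h : π.Rule m x l w) : l.coins + π.roomCoins w = m.coins + π.roomCoins x := by
  cases h <;> grind [roomCoins]

theorem tokens_eq (h : π.Rule m x l w) : l.tokens + roomTokens w = m.tokens + roomTokens x := by
  cases h <;> grind [roomTokens]

theorem chests_eq (h : π.Rule m x l w) : l.chests + roomChests w = m.chests + roomChests x := by
  cases h <;> grind [roomChests]

theorem potential_lt (h : π.Rule m x l w) :
    π.memoryPotential l + roomPotential r w < π.memoryPotential m + roomPotential r x := by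
  rcases m with ⟨coins, tokens, chests, phase⟩
  cases h <;> dsimp only at * <;> subst_vars
  case elect | turn | finish | retire =>
    refine add_lt_add_left ?_ _
    simp only [memoryPotential, Prod.Lex.toLex_lt_toLex]
    grind
  case reset hchests =>
    have hpred : (chests - lastChests n r).toNat = (chests - 1 - lastChests n r).toNat + 1 := by lia
    simp only [memoryPotential, roomPotential, ← toLex_add, Prod.mk_add_mk,
      Prod.Lex.toLex_lt_toLex, hpred]
    grind
  all_goals
    simp only [memoryPotential, roomPotential, ← toLex_add, Prod.mk_add_mk,
      Prod.Lex.toLex_lt_toLex]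
    grind

end Rule

/-- A prisoner before the election. -/
structure Candidate (m : Memory) : Prop where
  phase : m.phase = .regular
  tokens : 0 ≤ m.tokens
  chests : 0 ≤ m.chests
  token_or_quota : 0 < m.tokens ∨ π.quota ≤ m.coins

/-- A prisoner other than the leader, outside a tour. -/
structure Idle (m : Memory) : Prop where
  phase : m.phase = .regular
  tokens : m.tokens = 0
  coins : π.quota ≤ m.coins
  chests : m.chests ≤ r + 1

/-- A prisoner other than the leader, during a tour. The coins of the last chest are kept. -/
structure OnTour (m : Memory) : Prop where
  phase : m.phase = .marking ∨ m.phase = .unmarking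
  tokens : -r ≤ m.tokens ∧ m.tokens ≤ 0
  coins : π.quota + π.worth ≤ m.coins
  chests : m.chests = r + 1

/-- The leader before the final tour. -/
structure Presiding (m : Memory) : Prop where
  phase : m.phase = .leader
  tokens : m.tokens = n
  coins : π.quota - 1 - π.worth ≤ m.coins
  chests : lastChests n r ≤ m.chests

/-- The leader on the final tour. -/
structure Closing (m : Memory) : Prop where
  phase : m.phase = .finishing
  tokens : n - r ≤ m.tokens ∧ m.tokens ≤ n
  coins : m.coins = π.quota - 1
  chests : m.chests = lastChests n r

/-- A prisoner whose next moves put tokens into empty rooms to record visits. -/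
def Marks (m : Memory) : Prop := m.phase = .marking ∨ m.phase = .finishing

section Local

variable {π} {m l : Memory} {x w : ℕ}

theorem Candidate.step (hm : π.Candidate m) (hx : x = 0 → m.chests < r) (h : π.Rule m x l w) :
    π.Candidate l ∨ π.Presiding l ∧ m.tokens = n := by
  cases hm; cases h <;> grind [Candidate, Presiding, π.worth_pos]

theorem follower_step (hm : π.Idle m ∨ π.OnTour m) (h : π.Rule m x l w) :
    π.Idle l ∨ π.OnTour l := by
  have := π.worth_pos
  cases h <;> grind [Idle, OnTour]

theorem leader_step (hm : π.Presiding m ∨ π.Closing m) (h : π.Rule m x l w) :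
    π.Presiding l ∨ π.Closing l := by
  cases h <;> grind [Presiding, Closing]

theorem Rule.marks (h : π.Rule m x l w) (hl : Marks l) :
    Marks m ∨ x = 0 ∨ m.phase = .leader ∧ m.coins = π.quota - 1 := by
  cases h <;> grind [Marks]

theorem Rule.writes_token (h : π.Rule m x l w) (hw : w = 3) :
    x = 3 ∨ Marks m ∨ m.phase = .regular ∧ 0 < m.tokens := by
  cases h <;> grind [Marks]

theorem Rule.toured (h : π.Rule m x l w) (hchests : l.chests = r + 1) (hphase : l.phase ≠ .marking)
    (hm : π.Idle m ∨ π.OnTour m) :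
    m.chests = r + 1 ∧ m.phase ≠ .marking ∨ m.phase = .marking ∧ m.tokens = -r := by
  cases h <;> grind [Idle, OnTour]

end Local

/-- The conservation laws of the protocol. -/
structure Conserved (C : Config Memory n r) : Prop where
  room_lt : ∀ x, C.room x < 4
  coins : C.total Memory.coins π.roomCoins = n * π.quota - 1
  tokens : C.total Memory.tokens roomTokens = n
  chests : C.total Memory.chests roomChests = r

/-- The configurations before the election. -/
structure Candidates (C : Config Memory n r) : Prop extends π.Conserved C where
  candidate : ∀ p, π.Candidate (C.mem p)

/-- The configurations after the election of `a`, where `V` contains the pairs visited so far.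
Tokens record visits of a prisoner who is marking, as does the end of the marking phase. -/
structure Elected (C : Config Memory n r) (V : Set (Fin n × Fin r)) (a : Fin n) : Prop
    extends π.Conserved C where
  leader : π.Presiding (C.mem a) ∨ π.Closing (C.mem a)
  follower : ∀ p, p ≠ a → π.Idle (C.mem p) ∨ π.OnTour (C.mem p)
  marked : ∀ p x, Marks (C.mem p) → C.room x = 3 → (p, x) ∈ V
  toured : ∀ p, p ≠ a → (C.mem p).chests = r + 1 → (C.mem p).phase ≠ .marking → ∀ x, (p, x) ∈ V

/-- The coins held by each prisoner and each room beyond the least possible number after the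
election of `a`. -/
def surplus (C : Config Memory n r) (a : Fin n) : Fin n ⊕ Fin r → ℤ
  | .inl p => (C.mem p).coins - π.quota + if p = a then π.worth + 1 else 0
  | .inr x => π.roomCoins (C.room x)

/-- The total surplus is the worth of one chest, so at most one prisoner or room can hold it all. -/
def HoldsReserve (C : Config Memory n r) (a : Fin n) (i : Fin n ⊕ Fin r) : Prop :=
  π.worth ≤ π.surplus C a i

variable {π} {C : Config Memory n r} {V W : Set (Fin n × Fin r)} {a p : Fin n} {x : Fin r}
  {l : Memory} {w : ℕ}

theorem roomCoins_nonneg (s : ℕ) : 0 ≤ π.roomCoins s := by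
  have := π.worth_pos
  grind [roomCoins]

theorem roomTokens_nonneg (s : ℕ) : 0 ≤ roomTokens s := by grind [roomTokens]

theorem roomChests_nonneg (s : ℕ) : 0 ≤ roomChests s := by grind [roomChests]

theorem sum_roomTokens_eq_zero_iff (ρ : Fin r → ℕ) :
    ∑ x, roomTokens (ρ x) = 0 ↔ ∀ x, ρ x ≠ 3 := by
  rw [Finset.sum_eq_zero_iff_of_nonneg fun x _ ↦ roomTokens_nonneg (ρ x)]
  grind [roomTokens]

theorem sum_roomTokens_eq_iff (ρ : Fin r → ℕ) :
    ∑ x, roomTokens (ρ x) = r ↔ ∀ x, ρ x = 3 := by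
  have hle : ∀ x ∈ Finset.univ, roomTokens (ρ x) ≤ 1 := by grind [roomTokens]
  have hcard : (r : ℤ) = ∑ _ : Fin r, 1 := by simp
  rw [hcard, Finset.sum_eq_sum_iff_of_le hle]
  grind [roomTokens]

theorem holdsReserve_room (hx : C.room x = 0) : π.HoldsReserve C a (.inr x) := by
  simp [HoldsReserve, surplus, roomCoins, hx]

theorem Conserved.update (h : π.Conserved C) (hstep : π.Rule (C.mem p) (C.room x) l w) :
    π.Conserved (C.update p x l w) where
  room_lt y := by grind [Config.room_update, hstep.room_lt le_rfl (h.room_lt x), h.room_lt y]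
  coins := (Config.total_update_eq hstep.coins_eq).trans h.coins
  tokens := (Config.total_update_eq hstep.tokens_eq).trans h.tokens
  chests := (Config.total_update_eq hstep.chests_eq).trans h.chests

theorem Conserved.sum_roomTokens (h : π.Conserved C) (a : Fin n) :
    ∑ x, roomTokens (C.room x) = ∑ p, ((if p = a then (n : ℤ) else 0) - (C.mem p).tokens) := by
  have htokens := h.tokens
  rw [Config.total_eq] at htokens
  simp only [Finset.sum_sub_distrib, Finset.sum_ite_eq', Finset.mem_univ, if_true]
  linarith

theorem Conserved.sum_unopened (h : π.Conserved C) (a : Fin n) :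
    ∑ p ∈ Finset.univ.erase a, (r + 1 - (C.mem p).chests) =
      (C.mem a).chests - lastChests n r + ∑ x, roomChests (C.room x) := by
  have hchests := h.chests
  rw [Config.total_eq] at hchests
  simp only [Finset.sum_erase_eq_sub (Finset.mem_univ a), Finset.sum_sub_distrib, Finset.sum_const,
    Finset.card_univ, Fintype.card_fin, nsmul_eq_mul, lastChests]
  linarith

theorem Conserved.exists_unopened (h : π.Conserved C) (ha : lastChests n r ≤ (C.mem a).chests)
    (hx : C.room x = 0) : ∃ p ≠ a, (C.mem p).chests ≤ r := by
  by_contra! hall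
  have hnonpos : ∑ p ∈ Finset.univ.erase a, (r + 1 - (C.mem p).chests) ≤ 0 :=
    Finset.sum_nonpos fun p hp ↦ by linarith [hall p (Finset.ne_of_mem_erase hp)]
  have hpos : 0 < ∑ y, roomChests (C.room y) :=
    Finset.sum_pos' (fun y _ ↦ roomChests_nonneg _) ⟨x, Finset.mem_univ x, by simp [roomChests, hx]⟩
  linarith [h.sum_unopened a]

theorem Conserved.room_ne_three (h : π.Conserved C) (ha : π.Presiding (C.mem a))
    (hidle : ∀ p ≠ a, π.Idle (C.mem p)) (x : Fin r) : C.room x ≠ 3 := by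
  refine (sum_roomTokens_eq_zero_iff _).mp ?_ x
  rw [h.sum_roomTokens a]
  refine Finset.sum_eq_zero fun p _ ↦ ?_
  split_ifs with hp
  · rw [hp, ha.tokens, sub_self]
  · rw [(hidle p hp).tokens, sub_self]

namespace Candidates

theorem init : π.Candidates π.protocol.initial where
  room_lt := by simp [Protocol.initial]
  coins := by
    simp [Config.total_eq, Protocol.initial, protocol, roomCoins, π.budget]
  tokens := by simp [Config.total_eq, Protocol.initial, protocol, roomTokens]
  chests := by simp [Config.total_eq, Protocol.initial, protocol, roomChests]
  candidate _ := ⟨rfl, by simp [Protocol.initial, protocol], le_rfl,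
    .inl (by simp [Protocol.initial, protocol])⟩

theorem value_tokens_nonneg (h : π.Candidates C) (i : Fin n ⊕ Fin r) :
    0 ≤ C.value Memory.tokens roomTokens i := by
  rcases i with p | x
  exacts [(h.candidate p).tokens, roomTokens_nonneg _]

theorem value_chests_nonneg (h : π.Candidates C) (i : Fin n ⊕ Fin r) :
    0 ≤ C.value Memory.chests roomChests i := by
  rcases i with p | x
  exacts [(h.candidate p).chests, roomChests_nonneg _]

theorem chests_le (h : π.Candidates C) (p : Fin n) : (C.mem p).chests ≤ r :=
  h.chests ▸ Finset.single_le_sum (fun i _ ↦ h.value_chests_nonneg i) (Finset.mem_univ (Sum.inl p))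

theorem chests_lt (h : π.Candidates C) (hx : C.room x = 0) (p : Fin n) : (C.mem p).chests < r := by
  have hle := add_le_sum_of_nonneg h.value_chests_nonneg (Sum.inl_ne_inr (a := p) (b := x))
  have hone : roomChests (C.room x) = 1 := by rw [hx]; rfl
  have htotal := h.chests
  simp only [Config.total, Config.value, Sum.elim_inl, Sum.elim_inr] at hle htotal
  lia

theorem elect (h : π.Candidates C) (hstep : π.Rule (C.mem a) (C.room x) l w)
    (hl : π.Presiding l) (htokens : (C.mem a).tokens = n) :
    π.Elected (C.update a x l w) V a := by
  have hsettled (p : Fin n) (hp : p ≠ a) : (C.mem p).tokens = 0 :=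
    eq_zero_of_sum_le h.value_tokens_nonneg (i := .inl a) (j := .inl p)
      (h.tokens.trans htokens.symm).le (by simpa using hp.symm)
  refine ⟨h.toConserved.update hstep, .inl (by simpa [Config.mem_update] using hl),
    fun p hp ↦ .inl ?_, fun p y hp ↦ ?_, fun p hp hchests ↦ ?_⟩
  · have hcand := h.candidate p
    rw [Config.mem_update, if_neg hp]
    exact ⟨hcand.phase, hsettled p hp, by grind [Candidate], (h.chests_le p).trans (by lia)⟩
  · grind [Config.mem_update, Marks, Presiding, Candidate, h.candidate p]
  · rw [Config.mem_update, if_neg hp] at hchests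
    linarith [h.chests_le p]

theorem step (h : π.Candidates C) (hstep : π.Rule (C.mem p) (C.room x) l w) :
    π.Candidates (C.update p x l w) ∨ π.Elected (C.update p x l w) V p := by
  rcases (h.candidate p).step (fun hx ↦ h.chests_lt hx p) hstep with hl | ⟨hl, htokens⟩
  · exact .inl ⟨h.toConserved.update hstep, fun q ↦ by grind [Config.mem_update, h.candidate q]⟩
  · exact .inr (h.elect hstep hl htokens)

end Candidates

namespace Elected

theorem role (h : π.Elected C V a) (p : Fin n) :
    p = a ∧ (π.Presiding (C.mem p) ∨ π.Closing (C.mem p)) ∨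
      p ≠ a ∧ (π.Idle (C.mem p) ∨ π.OnTour (C.mem p)) := by
  by_cases hp : p = a
  exacts [.inl ⟨hp, hp ▸ h.leader⟩, .inr ⟨hp, h.follower p hp⟩]

theorem surplus_nonneg (h : π.Elected C V a) (i : Fin n ⊕ Fin r) : 0 ≤ π.surplus C a i := by
  have := π.worth_pos
  rcases i with p | x
  · grind [surplus, Presiding, Closing, Idle, OnTour, h.role p]
  · exact roomCoins_nonneg _

theorem sum_surplus (h : π.Elected C V a) : ∑ i, π.surplus C a i = π.worth := by
  have hcoins := h.coins
  rw [Config.total_eq] at hcoins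
  simp only [surplus, Fintype.sum_sum_type, Finset.sum_add_distrib,
    Finset.sum_sub_distrib, Finset.sum_const, Finset.card_univ, Fintype.card_fin, nsmul_eq_mul,
    Finset.sum_ite_eq', Finset.mem_univ, if_true]
  linarith

theorem surplus_eq_zero (h : π.Elected C V a) {i j : Fin n ⊕ Fin r} (hi : π.HoldsReserve C a i)
    (hij : i ≠ j) : π.surplus C a j = 0 :=
  eq_zero_of_sum_le h.surplus_nonneg (h.sum_surplus.trans_le hi) hij

theorem holder_unique (h : π.Elected C V a) {i j : Fin n ⊕ Fin r} (hi : π.HoldsReserve C a i)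
    (hj : π.HoldsReserve C a j) : i = j := by
  by_contra hij
  exact (h.surplus_eq_zero hi hij ▸ hj : π.worth ≤ 0).not_gt π.worth_pos

theorem holdsReserve_of_marks (h : π.Elected C V a) (hp : Marks (C.mem p)) :
    π.HoldsReserve C a (.inl p) := by
  grind [HoldsReserve, surplus, Marks, Presiding, Closing, Idle, OnTour, h.role p]

theorem settled_or_holdsReserve (h : π.Elected C V a) (p : Fin n) :
    (C.mem p).tokens = (if p = a then (n : ℤ) else 0) ∨ π.HoldsReserve C a (.inl p) := by
  grind [HoldsReserve, surplus, Presiding, Closing, Idle, OnTour, h.role p]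

theorem sum_roomTokens_of_holdsReserve (h : π.Elected C V a) {i : Fin n ⊕ Fin r}
    (hi : π.HoldsReserve C a i) :
    ∑ x, roomTokens (C.room x) =
      Sum.elim (fun p ↦ (if p = a then (n : ℤ) else 0) - (C.mem p).tokens) 0 i := by
  have hsettled (q : Fin n) (hq : .inl q ≠ i) :
      (if q = a then (n : ℤ) else 0) - (C.mem q).tokens = 0 := by
    rw [(h.settled_or_holdsReserve q).resolve_right fun hres ↦ hq (h.holder_unique hres hi),
      sub_self]
  rw [h.toConserved.sum_roomTokens a]
  rcases i with p | x
  · exact Fintype.sum_eq_single p fun q hq ↦ hsettled q (by simpa using hq)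
  · exact Finset.sum_eq_zero fun q _ ↦ hsettled q Sum.inl_ne_inr

theorem mono (h : π.Elected C V a) (hVW : V ⊆ W) : π.Elected C W a where
  toConserved := h.toConserved
  leader := h.leader
  follower := h.follower
  marked p x hp hx := hVW (h.marked p x hp hx)
  toured p hp hchests hphase x := hVW (h.toured p hp hchests hphase x)

theorem room_ne_three_of_marks_next (h : π.Elected C V a)
    (hstep : π.Rule (C.mem p) (C.room x) l w) (hl : Marks l) (hp : ¬ Marks (C.mem p))
    (y : Fin r) : C.room y ≠ 3 := by
  refine (sum_roomTokens_eq_zero_iff _).mp ?_ y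
  rcases (hstep.marks hl).resolve_left hp with hx | ⟨hphase, hcoins⟩
  · exact h.sum_roomTokens_of_holdsReserve (holdsReserve_room hx)
  · have hpa : p = a := by grind [Idle, OnTour, h.role p]
    subst hpa
    have hres : π.HoldsReserve C p (.inl p) := by simp [HoldsReserve, surplus, hcoins]
    have htokens : (C.mem p).tokens = n := by grind [Presiding, Closing, h.leader]
    simpa [htokens] using h.sum_roomTokens_of_holdsReserve hres

theorem marks_of_writes_token (h : π.Elected C V a) (hstep : π.Rule (C.mem p) (C.room x) l 3) :
    C.room x = 3 ∨ Marks (C.mem p) := by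
  rcases hstep.writes_token rfl with hx | hp | ⟨hphase, htokens⟩
  · exact .inl hx
  · exact .inr hp
  · grind [Presiding, Closing, Idle, OnTour, h.role p]

theorem marked_update (h : π.Elected C V a) (hV : (p, x) ∈ V)
    (hstep : π.Rule (C.mem p) (C.room x) l w) (q : Fin n) (y : Fin r)
    (hq : Marks ((C.update p x l w).mem q)) (hy : (C.update p x l w).room y = 3) : (q, y) ∈ V := by
  rw [Config.mem_update] at hq
  rw [Config.room_update] at hy
  split_ifs at hq hy with hqp hyx hyx
  · rwa [hqp, hyx]
  · by_cases hp : Marks (C.mem p)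
    · exact hqp ▸ h.marked p y hp hy
    · exact absurd hy (h.room_ne_three_of_marks_next hstep hq hp y)
  · subst hyx hy
    rcases h.marks_of_writes_token hstep with hy | hp
    · exact h.marked q y hq hy
    · exact absurd (Sum.inl_injective
        (h.holder_unique (h.holdsReserve_of_marks hq) (h.holdsReserve_of_marks hp))) hqp
  · exact h.marked q y hq hy

theorem toured_of_turn (h : π.Elected C V a) (hp : p ≠ a) (hphase : (C.mem p).phase = .marking)
    (htokens : (C.mem p).tokens = -r) (y : Fin r) : (p, y) ∈ V := by
  have hmarks : Marks (C.mem p) := .inl hphase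
  have hsum := h.sum_roomTokens_of_holdsReserve (h.holdsReserve_of_marks hmarks)
  simp only [Sum.elim_inl, if_neg hp, htokens, zero_sub, neg_neg] at hsum
  exact h.marked p y hmarks ((sum_roomTokens_eq_iff _).mp hsum y)

theorem step (h : π.Elected C V a) (hV : (p, x) ∈ V) (hstep : π.Rule (C.mem p) (C.room x) l w) :
    π.Elected (C.update p x l w) V a where
  toConserved := h.toConserved.update hstep
  leader := by
    rw [Config.mem_update]
    split_ifs with hap
    exacts [leader_step (hap ▸ h.leader) hstep, h.leader]
  follower q hq := by
    rw [Config.mem_update]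
    split_ifs with hqp
    exacts [follower_step (hqp ▸ h.follower q hq) hstep, h.follower q hq]
  marked := h.marked_update hV hstep
  toured q hq hchests hphase y := by
    rw [Config.mem_update] at hchests hphase
    split_ifs at hchests hphase with hqp
    · subst hqp
      rcases hstep.toured hchests hphase (h.follower q hq) with
        ⟨hchests, hphase⟩ | ⟨hphase, htokens⟩
      exacts [h.toured q hq hchests hphase y, h.toured_of_turn hq hphase htokens y]
    · exact h.toured q hq hchests hphase y

theorem chests_le (h : π.Elected C V a) (hp : p ≠ a) : (C.mem p).chests ≤ r + 1 := by
  grind [Idle, OnTour, h.role p]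

theorem chests_eq_of_room_ne_zero (h : π.Elected C V a) (ha : (C.mem a).chests = lastChests n r)
    (hrooms : ∀ x, C.room x ≠ 0) (hp : p ≠ a) : (C.mem p).chests = r + 1 := by
  have hsum := h.sum_unopened a
  rw [ha, sub_self, zero_add, Finset.sum_eq_zero (f := fun x ↦ roomChests (C.room x))
      fun x _ ↦ if_neg (hrooms x), Finset.sum_eq_zero_iff_of_nonneg fun q hq ↦
      sub_nonneg.mpr (h.chests_le (Finset.ne_of_mem_erase hq))] at hsum
  linarith [hsum p (by simpa using hp)]

theorem all_visited_of_halted (h : π.Elected C V a) (hp : π.protocol.Halted (C.mem p))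
    (q : Fin n) (y : Fin r) : (q, y) ∈ V := by
  obtain ⟨hphase, htokens⟩ := hp
  have hpa : p = a := by grind [Idle, OnTour, h.role p]
  subst hpa
  have hmarks : Marks (C.mem p) := .inr hphase
  have hres := h.holdsReserve_of_marks hmarks
  have hsum := h.sum_roomTokens_of_holdsReserve hres
  simp only [Sum.elim_inl, if_true, htokens, sub_sub_cancel] at hsum
  have hrooms := (sum_roomTokens_eq_iff _).mp hsum
  by_cases hqp : q = p
  · exact hqp ▸ h.marked p y hmarks (hrooms y)
  · have hchests : (C.mem p).chests = lastChests n r := by grind [Presiding, Closing, h.leader]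
    have hall := h.chests_eq_of_room_ne_zero hchests (by simp [hrooms]) hqp
    refine h.toured q hqp hall (fun hmarking ↦ ?_) y
    exact hqp (Sum.inl_injective (h.holder_unique (h.holdsReserve_of_marks (.inl hmarking)) hres))

end Elected

namespace Candidates

theorem exists_coins_lt (h : π.Candidates C) : ∃ p, (C.mem p).coins < π.quota := by
  by_contra! hall
  have hmem : n * π.quota ≤ ∑ p, (C.mem p).coins := by
    simpa using Finset.card_nsmul_le_sum Finset.univ _ _ fun p _ ↦ hall p
  have hroom : 0 ≤ ∑ x, π.roomCoins (C.room x) := Finset.sum_nonneg fun x _ ↦ roomCoins_nonneg _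
  have hcoins := h.coins
  rw [Config.total_eq] at hcoins
  linarith

theorem room_eq_one (h : π.Candidates C) (hC : π.protocol.Quiescent C) (x : Fin r) :
    C.room x = 1 := by
  obtain ⟨p, hp⟩ := h.exists_coins_lt
  have hphase := (h.candidate p).phase
  have hlt := h.room_lt x
  interval_cases hx : C.room x
  · exact absurd (Rule.openChest hphase (h.chests_lt hx p)) (hC.not_step hx)
  · rfl
  · exact absurd (Rule.takeCoin hphase hp) (hC.not_step hx)
  · exact absurd (Rule.takeToken hphase hp) (hC.not_step hx)

theorem coins_le_quota (h : π.Candidates C) (hC : π.protocol.Quiescent C) (x : Fin r) (p : Fin n) :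
    (C.mem p).coins ≤ π.quota := by
  by_contra! hp
  exact hC.not_step (h.room_eq_one hC x) (Rule.dropCoin (h.candidate p).phase hp)

theorem exists_short (h : π.Candidates C) (hC : π.protocol.Quiescent C) (x : Fin r) :
    ∃ p, (C.mem p).coins = π.quota - 1 ∧ ∀ q ≠ p, (C.mem q).coins = π.quota := by
  have hnonneg (p : Fin n) : 0 ≤ π.quota - (C.mem p).coins :=
    sub_nonneg.mpr (h.coins_le_quota hC x p)
  have hsum : ∑ p, (π.quota - (C.mem p).coins) = 1 := by
    have hcoins := h.coins
    rw [Config.total_eq, Finset.sum_eq_zero (f := fun x ↦ π.roomCoins (C.room x)) fun x _ ↦ by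
      simp [roomCoins, h.room_eq_one hC], add_zero] at hcoins
    rw [Finset.sum_sub_distrib, hcoins]
    simp
  obtain ⟨p, hp⟩ := h.exists_coins_lt
  have hle := Finset.single_le_sum (fun q _ ↦ hnonneg q) (Finset.mem_univ p)
  refine ⟨p, by lia, fun q hq ↦ ?_⟩
  linarith [eq_zero_of_sum_le hnonneg (i := p) (by lia) hq.symm]

theorem tokens_eq_of_short (h : π.Candidates C) (hC : π.protocol.Quiescent C) (x : Fin r)
    (hp : ∀ q ≠ p, (C.mem q).coins = π.quota) : (C.mem p).tokens = n := by
  rw [← h.tokens, Config.total, Fintype.sum_eq_single (Sum.inl p)]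
  · rfl
  · rintro (q | y) hq
    · by_contra htokens
      exact hC.not_step (h.room_eq_one hC x) (Rule.dropToken (h.candidate q).phase
        (hp q (by simpa using hq)) ((h.candidate q).tokens.lt_of_ne' htokens))
    · simp [Config.value, h.room_eq_one hC, roomTokens]

theorem lastChests_le (h : π.Candidates C) (p : Fin n) (hrooms : ∀ x, C.room x = 1) :
    lastChests n r ≤ (C.mem p).chests := by
  have hnonneg : 0 ≤ ∑ q ∈ Finset.univ.erase p, (r + 1 - (C.mem q).chests) :=
    Finset.sum_nonneg fun q _ ↦ by linarith [h.chests_le q]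
  have hsum := h.sum_unopened p
  rw [Finset.sum_eq_zero (f := fun x ↦ roomChests (C.room x)) fun x _ ↦ by
    simp [roomChests, hrooms], add_zero] at hsum
  linarith

theorem not_quiescent (h : π.Candidates C) (hr : 0 < r) : ¬ π.protocol.Quiescent C := by
  intro hC
  let x : Fin r := ⟨0, hr⟩
  obtain ⟨p, hcoins, hp⟩ := h.exists_short hC x
  exact hC.not_step (rfl : C.room x = _) (Rule.elect (h.candidate p).phase hcoins
    (h.tokens_eq_of_short hC x hp) (h.lastChests_le p (h.room_eq_one hC)))

end Candidates

namespace Elected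

theorem room_eq_one_or_three (h : π.Elected C V a) (hp : π.HoldsReserve C a (.inl p))
    (x : Fin r) : C.room x = 1 ∨ C.room x = 3 := by
  have hcoins : π.roomCoins (C.room x) = 0 := h.surplus_eq_zero hp Sum.inl_ne_inr
  grind [roomCoins, π.worth_pos, h.room_lt x]

theorem exists_room_eq_one (h : π.Elected C V a) (hp : π.HoldsReserve C a (.inl p))
    (htokens : (if p = a then (n : ℤ) else 0) - (C.mem p).tokens ≠ r) : ∃ x, C.room x = 1 := by
  by_contra! hrooms
  refine htokens ((h.sum_roomTokens_of_holdsReserve hp).symm.trans ?_)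
  exact (sum_roomTokens_eq_iff _).mpr fun x ↦ (h.room_eq_one_or_three hp x).resolve_left (hrooms x)

theorem exists_room_eq_three (h : π.Elected C V a) (hp : π.HoldsReserve C a (.inl p))
    (htokens : (if p = a then (n : ℤ) else 0) - (C.mem p).tokens ≠ 0) : ∃ x, C.room x = 3 := by
  by_contra! hrooms
  exact htokens ((h.sum_roomTokens_of_holdsReserve hp).symm.trans
    ((sum_roomTokens_eq_zero_iff _).mpr hrooms))

theorem not_onTour (h : π.Elected C V a) (hC : π.protocol.Quiescent C) (x : Fin r) (hp : p ≠ a) :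
    ¬ π.OnTour (C.mem p) := by
  intro htour
  have hres : π.HoldsReserve C a (.inl p) := by
    simpa [HoldsReserve, surplus, hp, le_sub_iff_add_le'] using htour.coins
  obtain ⟨hle, hnonpos⟩ := htour.tokens
  rcases htour.phase with hphase | hphase
  · rcases hle.eq_or_lt with htokens | htokens
    · exact hC.not_step (rfl : C.room x = _) (Rule.turn hphase htokens.symm)
    · obtain ⟨y, hy⟩ := h.exists_room_eq_one hres (by rw [if_neg hp]; lia)
      exact hC.not_step hy (Rule.mark hphase htokens)
  · rcases hnonpos.eq_or_lt with htokens | htokens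
    · exact hC.not_step (rfl : C.room x = _) (Rule.finish hphase htokens)
    · obtain ⟨y, hy⟩ := h.exists_room_eq_three hres (by rw [if_neg hp]; lia)
      exact hC.not_step hy (Rule.unmark hphase htokens)

theorem halted_of_closing (h : π.Elected C V a) (hC : π.protocol.Quiescent C)
    (ha : π.Closing (C.mem a)) : π.protocol.Halted (C.mem a) := by
  refine ⟨ha.phase, ?_⟩
  by_contra htokens
  obtain ⟨y, hy⟩ := h.exists_room_eq_one (h.holdsReserve_of_marks (.inr ha.phase))
    (by rw [if_pos rfl]; lia)
  exact hC.not_step hy (Rule.finalMark ha.phase (ha.tokens.1.lt_of_ne' htokens))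

theorem leader_coins_le (h : π.Elected C V a) : (C.mem a).coins ≤ π.quota - 1 := by
  have hle := Finset.single_le_sum (fun i _ ↦ h.surplus_nonneg i) (Finset.mem_univ (.inl a))
  rw [h.sum_surplus] at hle
  simp only [surplus, if_true] at hle
  linarith

theorem leader_coins_lt (h : π.Elected C V a) (hC : π.protocol.Quiescent C)
    (ha : π.Presiding (C.mem a)) (hidle : ∀ p ≠ a, π.Idle (C.mem p)) (x : Fin r) :
    (C.mem a).coins < π.quota - 1 := by
  refine h.leader_coins_le.lt_of_ne fun hcoins ↦ ?_
  have hres : π.HoldsReserve C a (.inl a) := by simp [HoldsReserve, surplus, hcoins]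
  have hx := (h.room_eq_one_or_three hres x).resolve_right (h.toConserved.room_ne_three ha hidle x)
  rcases ha.chests.eq_or_lt with hchests | hchests
  · exact hC.not_step hx (Rule.retire ha.phase hcoins hchests.symm)
  · exact hC.not_step hx (Rule.reset ha.phase hcoins hchests)

theorem room_eq_one (h : π.Elected C V a) (hC : π.protocol.Quiescent C)
    (ha : π.Presiding (C.mem a)) (hidle : ∀ p ≠ a, π.Idle (C.mem p))
    (hcoins : (C.mem a).coins < π.quota - 1) (x : Fin r) : C.room x = 1 := by
  have hlt := h.room_lt x
  interval_cases hx : C.room x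
  · obtain ⟨p, hp, hle⟩ := h.toConserved.exists_unopened ha.chests hx
    have hphase := (hidle p hp).phase
    rcases hle.eq_or_lt with hchests | hchests
    · exact absurd (Rule.startTour hphase hchests (hidle p hp).tokens) (hC.not_step hx)
    · exact absurd (Rule.openChest hphase hchests) (hC.not_step hx)
  · rfl
  · exact absurd (Rule.collect ha.phase hcoins) (hC.not_step hx)
  · exact absurd hx (h.toConserved.room_ne_three ha hidle x)

theorem not_presiding (h : π.Elected C V a) (hC : π.protocol.Quiescent C)
    (hidle : ∀ p ≠ a, π.Idle (C.mem p)) (x : Fin r) : ¬ π.Presiding (C.mem a) := by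
  intro ha
  have hcoins := h.leader_coins_lt hC ha hidle x
  have hrooms := h.room_eq_one hC ha hidle hcoins
  have hquota (p : Fin n) (hp : p ≠ a) : (C.mem p).coins = π.quota := by
    refine le_antisymm ?_ (hidle p hp).coins
    by_contra! hlt
    exact hC.not_step (hrooms x) (Rule.dropCoin (hidle p hp).phase hlt)
  have hsum := h.sum_surplus
  rw [Fintype.sum_eq_single (.inl a)] at hsum
  · simp only [surplus, if_true] at hsum
    linarith
  · rintro (p | y) hi
    · have hp : p ≠ a := by simpa using hi
      simp [surplus, hquota p hp, hp]
    · simp [surplus, roomCoins, hrooms]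

theorem halted_of_quiescent (h : π.Elected C V a) (hr : 0 < r) (hC : π.protocol.Quiescent C) :
    π.protocol.Halted (C.mem a) := by
  let x : Fin r := ⟨0, hr⟩
  have hidle (p : Fin n) (hp : p ≠ a) : π.Idle (C.mem p) :=
    (h.follower p hp).resolve_right (h.not_onTour hC x hp)
  exact h.halted_of_closing hC (h.leader.resolve_left (h.not_presiding hC hidle x))

end Elected

theorem winning (π : Parameters n r) (hr : 0 < r) :
    Winning (n := n) (r := r) fun _ ↦ π.protocol.strategy := by
  refine Protocol.winning_of_invariant (φ := π.memoryPotential) (ρ := roomPotential r)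
    (Inv := fun C V ↦ π.Candidates C ∨ ∃ a, π.Elected C V a) (fun _ _ _ _ ↦ Rule.potential_lt)
    (.inl Candidates.init) ?mono ?step ?halted ?quiescent
  case mono =>
    rintro C V W (h | ⟨a, h⟩) hVW
    exacts [.inl h, .inr ⟨a, h.mono hVW⟩]
  case step =>
    rintro C V p x l w (h | ⟨a, h⟩) hV hstep
    exacts [(h.step hstep).imp_right fun h ↦ ⟨p, h⟩, .inr ⟨a, h.step hV hstep⟩]
  case halted =>
    rintro C V p (h | ⟨a, h⟩) hp
    · cases (h.candidate p).phase.symm.trans hp.1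
    · exact h.all_visited_of_halted hp
  case quiescent =>
    rintro C V (h | ⟨a, h⟩) hC
    exacts [(h.not_quiescent hr hC).elim, ⟨a, h.halted_of_quiescent hr hC⟩]

end Parameters

end PrisonersGame

open PrisonersGame in
theorem symmetric_winning_of_leader_election_general {n r k : ℕ} (hk : 4 ≤ k)
    (h : ∃ σ : Strategy, IsLeaderElection n r σ) : HasSymmetricWinningStrategy n r k := by
  obtain ⟨σ, hσ⟩ := h
  by_cases hpos : 0 < n ∧ 0 < r
  · obtain ⟨hn, hr⟩ := hpos
    obtain ⟨c, y, hy, hbudget⟩ := exists_mul_eq_mul_add_one hn (hσ.coprime hn hr)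
    let π : Parameters n r := ⟨y, c, hy, hbudget⟩
    have hvalid : π.protocol.strategy.ValidFor k :=
      π.protocol.strategy_validFor fun _ _ _ _ hstep ↦ Parameters.Rule.room_lt hstep hk
    exact ⟨π.protocol.strategy, hvalid, π.winning hr⟩
  · exact ⟨fun _ s ↦ (s, false), fun _ _ _ hs ↦ hs, fun sched ↦
      absurd ⟨(sched 0).1.pos, (sched 0).2.pos⟩ hpos⟩

open PrisonersGame in
/-- If the prisoners have a symmetric leader-election strategy with `q` states,
then they have a symmetric winning strategy with `q + 4` states. -/
theorem symmetric_winning_of_leader_election (n r q : ℕ)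
    (h : ∃ σ : Strategy, σ.ValidFor q ∧ IsLeaderElection n r σ) :
    HasSymmetricWinningStrategy n r (q + 4) :=
  symmetric_winning_of_leader_election_general (Nat.le_add_left 4 q) (h.imp fun _ hσ ↦ hσ.2)
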